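/- Let α, β > 0 and let μ be the Gamma(α, β) probability measure on ℝ, with density f(x) = (β^α/Γ(α))·x^{α-1}·e^{-βx} for x > 0 and 0 otherwise. Let g : ℝ → ℝ be differentiable on (0, ∞) and suppose: g(x)·f(x) → 0 as x → 0⁺ and as x → ∞; the derivative of x ↦ g(x)·f(x) is integrable on (0, ∞); and the functions x ↦ g(x)·((α-1)/x - β) and g' are μ-integrable. Then ∫ [ g(x)·((α-1)/x - β) + g'(x) ] dμ(x) = 0. -/

import Mathlib

open MeasureTheory Filter Topology

/-!
If `s` is the score of the density `f`, that is `f' = f * s`, then `f * (g * s + g')` is the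
derivative of `g * f`. The integral of `g * s + g'` against the density `f` is therefore the
difference of the boundary values of `g * f`. For the Gamma model the score is `(α - 1) / x - β`
whatever the normalizing constant.
-/

section WithDensity

variable {X : Type*} {mX : MeasurableSpace X} {μ : Measure X}

theorem withDensity_eq_restrict_withDensity {t : Set X} (ht : MeasurableSet t) {f : X → ENNReal}
    (hf : ∀ x ∉ t, f x = 0) : μ.withDensity f = (μ.restrict t).withDensity f := by
  rw [← withDensity_indicator ht, Set.indicator_eq_self.2 (Function.support_subset_iff'.2 hf)]

variable {E : Type*} [NormedAddCommGroup E] [NormedSpace ℝ E] {f : X → ℝ}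

theorem toReal_ofReal_smul_ae_eq (hf0 : 0 ≤ᵐ[μ] f) (h : X → E) :
    (fun x ↦ (ENNReal.ofReal (f x)).toReal • h x) =ᵐ[μ] fun x ↦ f x • h x := by
  filter_upwards [hf0] with x hx
  rw [ENNReal.toReal_ofReal hx]

theorem integrable_withDensity_ofReal_iff (hf : AEMeasurable f μ) (hf0 : 0 ≤ᵐ[μ] f) {h : X → E} :
    Integrable h (μ.withDensity fun x ↦ ENNReal.ofReal (f x)) ↔
      Integrable (fun x ↦ f x • h x) μ := by
  rw [integrable_withDensity_iff_integrable_smul₀' hf.ennreal_ofReal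
    (ae_of_all _ fun _ ↦ ENNReal.ofReal_lt_top)]
  exact integrable_congr (toReal_ofReal_smul_ae_eq hf0 h)

theorem integral_withDensity_ofReal (hf : AEMeasurable f μ) (hf0 : 0 ≤ᵐ[μ] f) (h : X → E) :
    ∫ x, h x ∂(μ.withDensity fun x ↦ ENNReal.ofReal (f x)) = ∫ x, f x • h x ∂μ := by
  rw [integral_withDensity_eq_integral_toReal_smul₀ hf.ennreal_ofReal
    (ae_of_all _ fun _ ↦ ENNReal.ofReal_lt_top)]
  exact integral_congr_ae (toReal_ofReal_smul_ae_eq hf0 h)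

end WithDensity

section Stein

/-- The Stein operator `g ↦ g * s + g'` of a density on the real line with score `s`. It is
meaningful only where `g` is differentiable, since `deriv g` is `0` elsewhere. -/
noncomputable def steinOperator (s g : ℝ → ℝ) (x : ℝ) : ℝ :=
  g x * s x + deriv g x

variable {a l m : ℝ} {f s g : ℝ → ℝ}

theorem integral_Ioi_mul_steinOperator
    (hf : ∀ x ∈ Set.Ioi a, HasDerivAt f (f x * s x) x) (hg : DifferentiableOn ℝ g (Set.Ioi a))
    (hint : IntegrableOn (fun x ↦ f x * steinOperator s g x) (Set.Ioi a))
    (hl : Tendsto (fun x ↦ g x * f x) (𝓝[>] a) (𝓝 l))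
    (hm : Tendsto (fun x ↦ g x * f x) atTop (𝓝 m)) :
    ∫ x in Set.Ioi a, f x * steinOperator s g x = m - l := by
  have hg' : ∀ x ∈ Set.Ioi a, HasDerivAt g (deriv g x) x := fun x hx ↦
    (hg.differentiableAt (Ioi_mem_nhds hx)).hasDerivAt
  have product_rule :
      (fun x ↦ f x * steinOperator s g x) = fun x ↦ deriv g x * f x + g x * (f x * s x) := by
    funext x
    rw [steinOperator]
    ring
  rw [product_rule] at hint ⊢
  exact integral_Ioi_deriv_mul_eq_sub hg' hf hint hl hm

theorem integral_steinOperator_withDensity_Ioi (hf0 : ∀ x ∈ Set.Ioi a, 0 ≤ f x)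
    (hf : ∀ x ∈ Set.Ioi a, HasDerivAt f (f x * s x) x) (hg : DifferentiableOn ℝ g (Set.Ioi a))
    (hint : Integrable (steinOperator s g)
      ((volume.restrict (Set.Ioi a)).withDensity fun x ↦ ENNReal.ofReal (f x)))
    (hl : Tendsto (fun x ↦ g x * f x) (𝓝[>] a) (𝓝 l))
    (hm : Tendsto (fun x ↦ g x * f x) atTop (𝓝 m)) :
    ∫ x, steinOperator s g x
      ∂((volume.restrict (Set.Ioi a)).withDensity fun x ↦ ENNReal.ofReal (f x)) = m - l := by
  have f_aemeasurable : AEMeasurable f (volume.restrict (Set.Ioi a)) :=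
    ContinuousOn.aemeasurable (fun x hx ↦ (hf x hx).continuousAt.continuousWithinAt)
      measurableSet_Ioi
  have f_nonneg : 0 ≤ᵐ[volume.restrict (Set.Ioi a)] f :=
    ae_restrict_of_forall_mem measurableSet_Ioi hf0
  rw [integrable_withDensity_ofReal_iff f_aemeasurable f_nonneg] at hint
  rw [integral_withDensity_ofReal f_aemeasurable f_nonneg]
  exact integral_Ioi_mul_steinOperator hf hg hint hl hm

end Stein

section Gamma

/-- The density `c * x ^ (α - 1) * exp (-(β * x))` on `(0, ∞)` of the Gamma model with an arbitrary
constant `c` in place of the normalizing constant `β ^ α / Γ(α)`. Unlike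
`ProbabilityTheory.gammaPDFReal`, it is `0` at `x = 0`. -/
noncomputable def gammaWeight (c α β x : ℝ) : ℝ :=
  if 0 < x then c * x ^ (α - 1) * Real.exp (-(β * x)) else 0

/-- The score (logarithmic derivative of the density) of the Gamma model on `(0, ∞)`. -/
noncomputable def gammaScore (α β x : ℝ) : ℝ :=
  (α - 1) / x - β

variable {c α β x : ℝ}

theorem gammaWeight_of_pos (hx : 0 < x) :
    gammaWeight c α β x = c * x ^ (α - 1) * Real.exp (-(β * x)) :=
  if_pos hx

theorem gammaWeight_of_nonpos (hx : x ≤ 0) : gammaWeight c α β x = 0 :=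
  if_neg hx.not_gt

theorem gammaWeight_nonneg (hc : 0 ≤ c) (hx : 0 < x) : 0 ≤ gammaWeight c α β x := by
  rw [gammaWeight_of_pos hx]
  positivity

theorem hasDerivAt_gammaWeight (hx : 0 < x) :
    HasDerivAt (gammaWeight c α β) (gammaWeight c α β x * gammaScore α β x) x := by
  have hpow : HasDerivAt (fun y : ℝ ↦ c * y ^ (α - 1)) (c * ((α - 1) * x ^ (α - 1 - 1))) x :=
    (Real.hasDerivAt_rpow_const (Or.inl hx.ne')).const_mul c
  have hexp : HasDerivAt (fun y ↦ Real.exp (-(β * y))) (Real.exp (-(β * x)) * -(β * 1)) x :=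
    ((hasDerivAt_id x).const_mul β).neg.exp
  have eventually_eq : gammaWeight c α β =ᶠ[𝓝 x]
      fun y ↦ c * y ^ (α - 1) * Real.exp (-(β * y)) := by
    filter_upwards [Ioi_mem_nhds hx] with y hy using gammaWeight_of_pos hy
  refine ((hpow.mul hexp).congr_of_eventuallyEq eventually_eq).congr_deriv ?_
  rw [gammaWeight_of_pos hx, gammaScore, Real.rpow_sub_one hx.ne']
  ring

theorem stein_mom_gamma_general (hc : 0 ≤ c) {g : ℝ → ℝ} {l m : ℝ}
    (hg : DifferentiableOn ℝ g (Set.Ioi 0))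
    (hint : Integrable (steinOperator (gammaScore α β) g)
      (volume.withDensity fun x ↦ ENNReal.ofReal (gammaWeight c α β x)))
    (hl : Tendsto (fun x ↦ g x * gammaWeight c α β x) (𝓝[>] 0) (𝓝 l))
    (hm : Tendsto (fun x ↦ g x * gammaWeight c α β x) atTop (𝓝 m)) :
    ∫ x, steinOperator (gammaScore α β) g x
      ∂(volume.withDensity fun x ↦ ENNReal.ofReal (gammaWeight c α β x)) = m - l := by
  have weight_zero : ∀ x ∉ Set.Ioi (0 : ℝ), ENNReal.ofReal (gammaWeight c α β x) = 0 :=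
    fun x hx ↦ by rw [gammaWeight_of_nonpos (not_lt.1 hx), ENNReal.ofReal_zero]
  rw [withDensity_eq_restrict_withDensity measurableSet_Ioi weight_zero] at hint ⊢
  exact integral_steinOperator_withDensity_Ioi (fun x hx ↦ gammaWeight_nonneg hc hx)
    (fun x hx ↦ hasDerivAt_gammaWeight hx) hg hint hl hm

end Gamma

/-- Stein's method of moments for the Gamma(α, β) measure: if `g·f` vanishes at `0⁺` and
`∞` and suitable integrability holds, then `∫ [g(x)((α-1)/x - β) + g'(x)] dμ(x) = 0`. -/
theorem stein_mom_gamma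
    (α β : ℝ) (hα : 0 < α) (hβ : 0 < β)
    (f : ℝ → ℝ)
    (hf : f = fun x => if 0 < x then
        (β ^ α / Real.Gamma α) * x ^ (α - 1) * Real.exp (-(β * x)) else 0)
    (μ : Measure ℝ)
    (hμ : μ = MeasureTheory.volume.withDensity (fun x => ENNReal.ofReal (f x)))
    (g : ℝ → ℝ)
    (hg : DifferentiableOn ℝ g (Set.Ioi 0))
    (hlim0 : Tendsto (fun x => g x * f x) (nhdsWithin 0 (Set.Ioi 0)) (𝓝 0))
    (hlimtop : Tendsto (fun x => g x * f x) atTop (𝓝 0))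
    (hint_deriv : IntegrableOn (deriv (fun x => g x * f x)) (Set.Ioi 0))
    (hint1 : Integrable (fun x => g x * ((α - 1) / x - β)) μ)
    (hint2 : Integrable (deriv g) μ) :
    ∫ x, (g x * ((α - 1) / x - β) + deriv g x) ∂μ = 0 := by
  subst hf hμ
  have normalizer_nonneg : 0 ≤ β ^ α / Real.Gamma α :=
    div_nonneg (Real.rpow_nonneg hβ.le α) (Real.Gamma_pos_of_pos hα).le
  exact (stein_mom_gamma_general normalizer_nonneg hg (hint1.add hint2) hlim0 hlimtop).trans
    (sub_self 0)
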